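/- Effect soundness for CBPV: if ∅ ⊢ M :^φ F A (M is a closed well-typed computation of returner type), then ∅ ⊢ M ⇓ return W # φ' for some closed value W and some effect φ' with φ' ≤eff φ. -/

import Mathlib

set_option autoImplicit false

/-- A preordered monoid of effects `(E, ·, ⊥, ≤eff)`, with a distinguished `tock` effect. -/
structure EffSig (E : Type) where
  op : E → E → E
  bot : E
  tock : E
  le : E → E → Prop
  op_assoc : ∀ a b c, op (op a b) c = op a (op b c)
  bot_op : ∀ a, op bot a = a
  op_bot : ∀ a, op a bot = a
  le_refl : ∀ a, le a a
  le_trans : ∀ a b c, le a b → le b c → le a c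
  le_op : ∀ a b c d, le a b → le c d → le (op a c) (op b d)

namespace CBPVEff

mutual
/-- CBPV value types: `unit`, graded thunks `U_φ B`, positive products. -/
inductive VTy (E : Type) : Type where
  | unit : VTy E
  | thunk : E → CTy E → VTy E
  | prod : VTy E → VTy E → VTy E
/-- CBPV computation types: functions, returners `F A`, negative products. -/
inductive CTy (E : Type) : Type where
  | arr : VTy E → CTy E → CTy E
  | F : VTy E → CTy E
  | wth : CTy E → CTy E → CTy E
end

mutual
/-- CBPV values (de Bruijn indices for variables). -/
inductive Val : Type where
  | var : Nat → Val
  | unit : Val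
  | thunk : Comp → Val
  | pair : Val → Val → Val
/-- CBPV computations. -/
inductive Comp : Type where
  | lam : Comp → Comp
  | app : Comp → Val → Comp
  | force : Val → Comp
  | split : Val → Comp → Comp
  | cpair : Comp → Comp → Comp
  | fst : Comp → Comp
  | snd : Comp → Comp
  | ret : Val → Comp
  | letin : Comp → Comp → Comp
  | tick : Comp
end

mutual
/-- The value typing judgment `Γ ⊢ V : A` of the CBPV type-and-effect system. -/
inductive VHasTy {E : Type} (S : EffSig E) : List (VTy E) → Val → VTy E → Prop where
  | var : ∀ {Γ : List (VTy E)} {x : Nat} {A : VTy E},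
      Γ[x]? = some A → VHasTy S Γ (.var x) A
  | unit : ∀ {Γ : List (VTy E)}, VHasTy S Γ .unit .unit
  | thunk : ∀ {Γ : List (VTy E)} {M : Comp} {φ : E} {B : CTy E},
      CHasTy S Γ M φ B → VHasTy S Γ (.thunk M) (.thunk φ B)
  | pair : ∀ {Γ : List (VTy E)} {V₁ V₂ : Val} {A₁ A₂ : VTy E},
      VHasTy S Γ V₁ A₁ → VHasTy S Γ V₂ A₂ → VHasTy S Γ (.pair V₁ V₂) (.prod A₁ A₂)

/-- The computation typing judgment `Γ ⊢ M :^φ B` of the CBPV type-and-effect system. -/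
inductive CHasTy {E : Type} (S : EffSig E) : List (VTy E) → Comp → E → CTy E → Prop where
  | tick : ∀ {Γ : List (VTy E)} {φ : E}, S.le S.tock φ → CHasTy S Γ .tick φ (.F .unit)
  | lam : ∀ {Γ : List (VTy E)} {A : VTy E} {M : Comp} {φ : E} {B : CTy E},
      CHasTy S (A :: Γ) M φ B → CHasTy S Γ (.lam M) φ (.arr A B)
  | app : ∀ {Γ : List (VTy E)} {M : Comp} {V : Val} {A : VTy E} {φ : E} {B : CTy E},
      CHasTy S Γ M φ (.arr A B) → VHasTy S Γ V A → CHasTy S Γ (.app M V) φ B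
  | force : ∀ {Γ : List (VTy E)} {V : Val} {φ' φ : E} {B : CTy E},
      VHasTy S Γ V (.thunk φ' B) → S.le φ' φ → CHasTy S Γ (.force V) φ B
  | ret : ∀ {Γ : List (VTy E)} {V : Val} {A : VTy E} {φ : E},
      VHasTy S Γ V A → S.le S.bot φ → CHasTy S Γ (.ret V) φ (.F A)
  | letin : ∀ {Γ : List (VTy E)} {M N : Comp} {A : VTy E} {φ₁ φ₂ φ : E} {B : CTy E},
      CHasTy S Γ M φ₁ (.F A) → CHasTy S (A :: Γ) N φ₂ B →
      S.le (S.op φ₁ φ₂) φ → CHasTy S Γ (.letin M N) φ B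
  | split : ∀ {Γ : List (VTy E)} {V : Val} {A₁ A₂ : VTy E} {N : Comp} {φ : E} {B : CTy E},
      VHasTy S Γ V (.prod A₁ A₂) → CHasTy S (A₂ :: A₁ :: Γ) N φ B →
      CHasTy S Γ (.split V N) φ B
  | cpair : ∀ {Γ : List (VTy E)} {M₁ M₂ : Comp} {φ : E} {B₁ B₂ : CTy E},
      CHasTy S Γ M₁ φ B₁ → CHasTy S Γ M₂ φ B₂ → CHasTy S Γ (.cpair M₁ M₂) φ (.wth B₁ B₂)
  | fst : ∀ {Γ : List (VTy E)} {M : Comp} {φ : E} {B₁ B₂ : CTy E},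
      CHasTy S Γ M φ (.wth B₁ B₂) → CHasTy S Γ (.fst M) φ B₁
  | snd : ∀ {Γ : List (VTy E)} {M : Comp} {φ : E} {B₁ B₂ : CTy E},
      CHasTy S Γ M φ (.wth B₁ B₂) → CHasTy S Γ (.snd M) φ B₂
end

/-- Closed values: closures of thunks, unit, and pairs of closed values. -/
inductive CloVal : Type where
  | clo : List CloVal → Comp → CloVal
  | unit : CloVal
  | pair : CloVal → CloVal → CloVal

/-- Closed terminal computations. -/
inductive Terminal : Type where
  | ret : CloVal → Terminal
  | lamClo : List CloVal → Comp → Terminal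
  | cpairClo : List CloVal → Comp → Comp → Terminal

/-- The value judgment `ρ ⊢ V ⇓ W`: closing a value under an environment. -/
inductive EvalVal : List CloVal → Val → CloVal → Prop where
  | var : ∀ {ρ : List CloVal} {x : Nat} {W : CloVal},
      ρ[x]? = some W → EvalVal ρ (.var x) W
  | unit : ∀ {ρ : List CloVal}, EvalVal ρ .unit .unit
  | thunk : ∀ {ρ : List CloVal} {M : Comp}, EvalVal ρ (.thunk M) (.clo ρ M)
  | pair : ∀ {ρ : List CloVal} {V₁ V₂ : Val} {W₁ W₂ : CloVal},
      EvalVal ρ V₁ W₁ → EvalVal ρ V₂ W₂ → EvalVal ρ (.pair V₁ V₂) (.pair W₁ W₂)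

/-- The effect-instrumented big-step judgment `ρ ⊢ M ⇓ T # φ`. -/
inductive EvalComp {E : Type} (S : EffSig E) : List CloVal → Comp → Terminal → E → Prop where
  | tick : ∀ {ρ : List CloVal}, EvalComp S ρ .tick (.ret .unit) S.tock
  | ret : ∀ {ρ : List CloVal} {V : Val} {W : CloVal},
      EvalVal ρ V W → EvalComp S ρ (.ret V) (.ret W) S.bot
  | lam : ∀ {ρ : List CloVal} {M : Comp}, EvalComp S ρ (.lam M) (.lamClo ρ M) S.bot
  | cpair : ∀ {ρ : List CloVal} {M₁ M₂ : Comp},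
      EvalComp S ρ (.cpair M₁ M₂) (.cpairClo ρ M₁ M₂) S.bot
  | app : ∀ {ρ ρ' : List CloVal} {M M' : Comp} {V : Val} {W : CloVal} {T : Terminal} {φ₁ φ₂ : E},
      EvalComp S ρ M (.lamClo ρ' M') φ₁ → EvalVal ρ V W →
      EvalComp S (W :: ρ') M' T φ₂ → EvalComp S ρ (.app M V) T (S.op φ₁ φ₂)
  | force : ∀ {ρ ρ' : List CloVal} {V : Val} {M : Comp} {T : Terminal} {φ : E},
      EvalVal ρ V (.clo ρ' M) → EvalComp S ρ' M T φ → EvalComp S ρ (.force V) T φ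
  | letin : ∀ {ρ : List CloVal} {M N : Comp} {W : CloVal} {T : Terminal} {φ₁ φ₂ : E},
      EvalComp S ρ M (.ret W) φ₁ → EvalComp S (W :: ρ) N T φ₂ →
      EvalComp S ρ (.letin M N) T (S.op φ₁ φ₂)
  | split : ∀ {ρ : List CloVal} {V : Val} {W₁ W₂ : CloVal} {N : Comp} {T : Terminal} {φ : E},
      EvalVal ρ V (.pair W₁ W₂) → EvalComp S (W₂ :: W₁ :: ρ) N T φ →
      EvalComp S ρ (.split V N) T φ
  | fst : ∀ {ρ ρ' : List CloVal} {M M₁ M₂ : Comp} {T : Terminal} {φ₁ φ₂ : E},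
      EvalComp S ρ M (.cpairClo ρ' M₁ M₂) φ₁ → EvalComp S ρ' M₁ T φ₂ →
      EvalComp S ρ (.fst M) T (S.op φ₁ φ₂)
  | snd : ∀ {ρ ρ' : List CloVal} {M M₁ M₂ : Comp} {T : Terminal} {φ₁ φ₂ : E},
      EvalComp S ρ M (.cpairClo ρ' M₁ M₂) φ₁ → EvalComp S ρ' M₂ T φ₂ →
      EvalComp S ρ (.snd M) T (S.op φ₁ φ₂)

/-! Soundness is proved with a logical relation indexed by types. The static effect of a
computation of function or product type also covers effects that happen only once its terminal is
eliminated, so bounding the evaluation effect `e` alone would be too weak to compose: the relation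
splits the static effect as `e · r ≤ φ`, where the residual `r` bounds the elimination of the
terminal. Applications and projections then spend `r` on the body, and at a returner type `⊥ ≤ r`
gives `e ≤ φ`. -/

section Effects

variable {E : Type} {S : EffSig E} {e₁ e₂ r φ₁ φ₂ φ : E}

theorem le_op_of_bot_le (h : S.le S.bot r) : S.le e₁ (S.op e₁ r) := by
  simpa only [S.op_bot] using S.le_op _ _ _ _ (S.le_refl e₁) h

theorem op_op_le_of_le_of_op_le (h₁ : S.le e₁ φ₁) (h₂ : S.le (S.op e₂ r) φ₂)
    (h : S.le (S.op φ₁ φ₂) φ) : S.le (S.op (S.op e₁ e₂) r) φ := by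
  rw [S.op_assoc]
  exact S.le_trans _ _ _ (S.le_op _ _ _ _ h₁ h₂) h

end Effects

theorem exists_getElem?_eq_some_of_forall₂ {α β : Type*} {R : α → β → Prop} {l₁ : List α}
    {l₂ : List β} (h : List.Forall₂ R l₁ l₂) {i : ℕ} {a : α} (ha : l₁[i]? = some a) :
    ∃ b, l₂[i]? = some b ∧ R a b := by
  obtain ⟨hi₁, rfl⟩ := List.getElem?_eq_some_iff.mp ha
  have hi₂ : i < l₂.length := h.length_eq ▸ hi₁
  exact ⟨l₂[i], List.getElem?_eq_getElem hi₂, h.get hi₁ hi₂⟩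

/-- In the environment `ρ`, the computation `M` evaluates to a terminal satisfying `P` within the
effect budget `φ`. The second argument of `P` is the residual effect: the part of the budget left
over for eliminating the terminal after the effect of the evaluation itself has been spent. -/
def EvalsWithin {E : Type} (S : EffSig E) (ρ : List CloVal) (M : Comp)
    (P : Terminal → E → Prop) (φ : E) : Prop :=
  ∃ T e r, EvalComp S ρ M T e ∧ P T r ∧ S.le (S.op e r) φ

mutual

/-- The logical relation on closed values: `W` behaves as a value of type `A`. -/
def ValRel {E : Type} (S : EffSig E) : VTy E → CloVal → Prop
  | .unit, W => W = .unit
  | .thunk φ B, W => ∃ ρ M, W = .clo ρ M ∧ EvalsWithin S ρ M (TermRel S B) φ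
  | .prod A₁ A₂, W => ∃ W₁ W₂, W = .pair W₁ W₂ ∧ ValRel S A₁ W₁ ∧ ValRel S A₂ W₂

/-- The logical relation on terminals: `T` behaves as a terminal of type `B` whose elimination
costs at most `φ`. A returned value has nothing left to run, so there `φ` need only lie above
`⊥`. -/
def TermRel {E : Type} (S : EffSig E) : CTy E → Terminal → E → Prop
  | .F A, T, φ => ∃ W, T = .ret W ∧ ValRel S A W ∧ S.le S.bot φ
  | .arr A B, T, φ => ∃ ρ M, T = .lamClo ρ M ∧
      ∀ W, ValRel S A W → EvalsWithin S (W :: ρ) M (TermRel S B) φ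
  | .wth B₁ B₂, T, φ => ∃ ρ M₁ M₂, T = .cpairClo ρ M₁ M₂ ∧
      EvalsWithin S ρ M₁ (TermRel S B₁) φ ∧
      EvalsWithin S ρ M₂ (TermRel S B₂) φ

end

/-- Semantic typing of values: `V` closes to a value of type `A` in every environment matching
`Γ`. -/
def SemVal {E : Type} (S : EffSig E) (Γ : List (VTy E)) (V : Val) (A : VTy E) : Prop :=
  ∀ ρ, List.Forall₂ (ValRel S) Γ ρ → ∃ W, EvalVal ρ V W ∧ ValRel S A W

/-- Semantic typing of computations: `M` evaluates within `φ` to a terminal of type `B` in every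
environment matching `Γ`. -/
def SemComp {E : Type} (S : EffSig E) (Γ : List (VTy E)) (M : Comp) (φ : E) (B : CTy E) : Prop :=
  ∀ ρ, List.Forall₂ (ValRel S) Γ ρ → EvalsWithin S ρ M (TermRel S B) φ

section EvalsWithin

variable {E : Type} {S : EffSig E} {ρ : List CloVal} {M : Comp} {P : Terminal → E → Prop}
  {φ φ' : E}

theorem EvalsWithin.mono (h : EvalsWithin S ρ M P φ) (hφ : S.le φ φ') :
    EvalsWithin S ρ M P φ' :=
  let ⟨T, e, r, hM, hT, hle⟩ := h
  ⟨T, e, r, hM, hT, S.le_trans _ _ _ hle hφ⟩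

theorem EvalsWithin.imp {ρ' : List CloVal} {N : Comp} (h : EvalsWithin S ρ M P φ)
    (hN : ∀ T e, EvalComp S ρ M T e → EvalComp S ρ' N T e) : EvalsWithin S ρ' N P φ :=
  let ⟨T, e, r, hM, hT, hle⟩ := h
  ⟨T, e, r, hN T e hM, hT, hle⟩

theorem EvalsWithin.imp_op {ρ' : List CloVal} {N : Comp} {e₁ φ₁ φ₂ : E}
    (h : EvalsWithin S ρ M P φ₂) (hN : ∀ T e, EvalComp S ρ M T e → EvalComp S ρ' N T (S.op e₁ e))
    (he₁ : S.le e₁ φ₁) (hφ : S.le (S.op φ₁ φ₂) φ) : EvalsWithin S ρ' N P φ :=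
  let ⟨T, e, r, hM, hT, hle⟩ := h
  ⟨T, S.op e₁ e, r, hN T e hM, hT, op_op_le_of_le_of_op_le he₁ hle hφ⟩

theorem EvalsWithin.of_evalComp_bot {T : Terminal} (hM : EvalComp S ρ M T S.bot) (hT : P T φ) :
    EvalsWithin S ρ M P φ :=
  ⟨T, S.bot, φ, hM, hT, by rw [S.bot_op]; exact S.le_refl φ⟩

theorem EvalsWithin.exists_ret {A : VTy E} (h : EvalsWithin S ρ M (TermRel S (.F A)) φ) :
    ∃ W e, EvalComp S ρ M (.ret W) e ∧ ValRel S A W ∧ S.le e φ := by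
  obtain ⟨T, e, r, hM, hT, hle⟩ := h
  rw [TermRel] at hT
  obtain ⟨W, rfl, hW, hr⟩ := hT
  exact ⟨W, e, hM, hW, S.le_trans _ _ _ (le_op_of_bot_le hr) hle⟩

end EvalsWithin

section Compatibility

variable {E : Type} {S : EffSig E} {Γ : List (VTy E)} {V V₁ V₂ : Val} {M M₁ M₂ N : Comp}
  {A A₁ A₂ : VTy E} {B B₁ B₂ : CTy E} {φ φ₁ φ₂ : E}

theorem SemVal.var {x : ℕ} (hx : Γ[x]? = some A) : SemVal S Γ (.var x) A := by
  intro ρ hρ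
  obtain ⟨W, hW, hWA⟩ := exists_getElem?_eq_some_of_forall₂ hρ hx
  exact ⟨W, .var hW, hWA⟩

theorem SemVal.unit : SemVal S Γ .unit .unit :=
  fun _ _ => ⟨.unit, .unit, by rw [ValRel]⟩

theorem SemVal.thunk (hM : SemComp S Γ M φ B) : SemVal S Γ (.thunk M) (.thunk φ B) :=
  fun ρ hρ => ⟨.clo ρ M, .thunk, by rw [ValRel]; exact ⟨ρ, M, rfl, hM ρ hρ⟩⟩

theorem SemVal.pair (hV₁ : SemVal S Γ V₁ A₁) (hV₂ : SemVal S Γ V₂ A₂) :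
    SemVal S Γ (.pair V₁ V₂) (.prod A₁ A₂) := by
  intro ρ hρ
  obtain ⟨W₁, hW₁, hWA₁⟩ := hV₁ ρ hρ
  obtain ⟨W₂, hW₂, hWA₂⟩ := hV₂ ρ hρ
  exact ⟨.pair W₁ W₂, .pair hW₁ hW₂, by rw [ValRel]; exact ⟨W₁, W₂, rfl, hWA₁, hWA₂⟩⟩

theorem SemComp.tick (hφ : S.le S.tock φ) : SemComp S Γ .tick φ (.F .unit) := by
  intro ρ _
  have hT : TermRel S (.F .unit) (.ret .unit) S.bot := by
    rw [TermRel]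
    exact ⟨.unit, rfl, by rw [ValRel], S.le_refl _⟩
  exact ⟨_, S.tock, S.bot, .tick, hT, by rwa [S.op_bot]⟩

theorem SemComp.ret (hV : SemVal S Γ V A) (hφ : S.le S.bot φ) :
    SemComp S Γ (.ret V) φ (.F A) := by
  intro ρ hρ
  obtain ⟨W, hW, hWA⟩ := hV ρ hρ
  refine .of_evalComp_bot (.ret hW) ?_
  rw [TermRel]
  exact ⟨W, rfl, hWA, hφ⟩

theorem SemComp.lam (hM : SemComp S (A :: Γ) M φ B) : SemComp S Γ (.lam M) φ (.arr A B) := by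
  intro ρ hρ
  refine .of_evalComp_bot .lam ?_
  rw [TermRel]
  exact ⟨ρ, M, rfl, fun W hW => hM (W :: ρ) (.cons hW hρ)⟩

theorem SemComp.app (hM : SemComp S Γ M φ (.arr A B)) (hV : SemVal S Γ V A) :
    SemComp S Γ (.app M V) φ B := by
  intro ρ hρ
  obtain ⟨T, e, r, heM, hT, hle⟩ := hM ρ hρ
  obtain ⟨W, hW, hWA⟩ := hV ρ hρ
  rw [TermRel] at hT
  obtain ⟨ρ', M', rfl, hbody⟩ := hT
  exact (hbody W hWA).imp_op (fun _ _ => .app heM hW) (S.le_refl e) hle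

theorem SemComp.force (hV : SemVal S Γ V (.thunk φ₁ B)) (hφ : S.le φ₁ φ) :
    SemComp S Γ (.force V) φ B := by
  intro ρ hρ
  obtain ⟨W, hW, hWA⟩ := hV ρ hρ
  rw [ValRel] at hWA
  obtain ⟨ρ', M, rfl, hM⟩ := hWA
  exact (hM.mono hφ).imp fun _ _ => .force hW

theorem SemComp.letin (hM : SemComp S Γ M φ₁ (.F A)) (hN : SemComp S (A :: Γ) N φ₂ B)
    (hφ : S.le (S.op φ₁ φ₂) φ) : SemComp S Γ (.letin M N) φ B := by
  intro ρ hρ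
  obtain ⟨W, e, heM, hWA, hle⟩ := (hM ρ hρ).exists_ret
  exact (hN (W :: ρ) (.cons hWA hρ)).imp_op (fun _ _ => .letin heM) hle hφ

theorem SemComp.split (hV : SemVal S Γ V (.prod A₁ A₂))
    (hN : SemComp S (A₂ :: A₁ :: Γ) N φ B) : SemComp S Γ (.split V N) φ B := by
  intro ρ hρ
  obtain ⟨W, hW, hWA⟩ := hV ρ hρ
  rw [ValRel] at hWA
  obtain ⟨W₁, W₂, rfl, hWA₁, hWA₂⟩ := hWA
  exact (hN (W₂ :: W₁ :: ρ) (.cons hWA₂ (.cons hWA₁ hρ))).imp fun _ _ => .split hW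

theorem SemComp.cpair (hM₁ : SemComp S Γ M₁ φ B₁) (hM₂ : SemComp S Γ M₂ φ B₂) :
    SemComp S Γ (.cpair M₁ M₂) φ (.wth B₁ B₂) := by
  intro ρ hρ
  refine .of_evalComp_bot .cpair ?_
  rw [TermRel]
  exact ⟨ρ, M₁, M₂, rfl, hM₁ ρ hρ, hM₂ ρ hρ⟩

theorem SemComp.fst (hM : SemComp S Γ M φ (.wth B₁ B₂)) : SemComp S Γ (.fst M) φ B₁ := by
  intro ρ hρ
  obtain ⟨T, e, r, heM, hT, hle⟩ := hM ρ hρ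
  rw [TermRel] at hT
  obtain ⟨ρ', M₁, M₂, rfl, hM₁, -⟩ := hT
  exact hM₁.imp_op (fun _ _ => .fst heM) (S.le_refl e) hle

theorem SemComp.snd (hM : SemComp S Γ M φ (.wth B₁ B₂)) : SemComp S Γ (.snd M) φ B₂ := by
  intro ρ hρ
  obtain ⟨T, e, r, heM, hT, hle⟩ := hM ρ hρ
  rw [TermRel] at hT
  obtain ⟨ρ', M₁, M₂, rfl, -, hM₂⟩ := hT
  exact hM₂.imp_op (fun _ _ => .snd heM) (S.le_refl e) hle

end Compatibility

mutual

theorem VHasTy.semVal {E : Type} {S : EffSig E} {Γ : List (VTy E)} {V : Val} {A : VTy E} :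
    VHasTy S Γ V A → SemVal S Γ V A
  | .var hx => .var hx
  | .unit => .unit
  | .thunk hM => .thunk hM.semComp
  | .pair hV₁ hV₂ => .pair hV₁.semVal hV₂.semVal

theorem CHasTy.semComp {E : Type} {S : EffSig E} {Γ : List (VTy E)} {M : Comp} {φ : E}
    {B : CTy E} : CHasTy S Γ M φ B → SemComp S Γ M φ B
  | .tick hφ => .tick hφ
  | .lam hM => .lam hM.semComp
  | .app hM hV => .app hM.semComp hV.semVal
  | .force hV hφ => .force hV.semVal hφ
  | .ret hV hφ => .ret hV.semVal hφ
  | .letin hM hN hφ => .letin hM.semComp hN.semComp hφ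
  | .split hV hN => .split hV.semVal hN.semComp
  | .cpair hM₁ hM₂ => .cpair hM₁.semComp hM₂.semComp
  | .fst hM => .fst hM.semComp
  | .snd hM => .snd hM.semComp

end

/-- Effect soundness for CBPV: a closed well-typed computation of returner type
evaluates to a returned closed value with an effect bounded by the static effect. -/
theorem effect_soundness {E : Type} (S : EffSig E) {M : Comp} {φ : E} {A : VTy E}
    (h : CHasTy S [] M φ (.F A)) :
    ∃ (W : CloVal) (φ' : E), EvalComp S [] M (.ret W) φ' ∧ S.le φ' φ := by
  obtain ⟨W, φ', hM, -, hle⟩ := (h.semComp [] .nil).exists_ret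
  exact ⟨W, φ', hM, hle⟩

end CBPVEff
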